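/- Let k ≥ 3 be an integer, 0 < θ ≤ 1, δ = x^{θ−1}, and Q = (δ·x^{k−2ρ})^{k/(2k−1)} with 0 < ρ < σ_k, where σ_k^{−1} = min(2^{k−1}, 2k(k−2)). Suppose α is real, a, q are integers with 1 ≤ q ≤ Q, gcd(a,q) = 1, |α − a/q| < 1/(qQ), and additionally q ≥ x^{2kρ} or |qα − a| ≥ δ^{−2}·x^{k−2kρ}. Then there is a constant C (depending only on k) such that w_k(q)^{1/2}·x^{θ}·(1 + δ²·x^k·|α − a/q|)^{−1/2} ≤ C·x^{θ−ρ}. -/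

import Mathlib

open scoped BigOperators

/-- The multiplicative function `w_k`, with `w_k(p^{ku+v}) = k p^{-u-1/2}` if `v = 1`
and `w_k(p^{ku+v}) = p^{-u-1}` if `2 ≤ v ≤ k` (where `u ≥ 0`, `1 ≤ v ≤ k`). -/
noncomputable def wk (k : ℕ) (n : ℕ) : ℝ :=
  ∏ p ∈ n.primeFactors,
    (if (n.factorization p - 1) % k = 0 then
      (k : ℝ) * (p : ℝ) ^ (-(((n.factorization p - 1) / k : ℕ) : ℝ) - 1 / 2)
    else
      (p : ℝ) ^ (-(((n.factorization p - 1) / k : ℕ) : ℝ) - 1))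

/-- `σ_k`, given by `σ_k⁻¹ = min(2^{k-1}, 2k(k-2))`. -/
noncomputable def sigmak (k : ℕ) : ℝ :=
  1 / min ((2 : ℝ) ^ (k - 1)) (2 * (k : ℝ) * ((k : ℝ) - 2))

/-- Bound for one local factor of `wk`. -/
lemma wk_factor_le (k : ℕ) (hk : 3 ≤ k) (p e : ℕ) (hp : 2 ≤ p) (he : 1 ≤ e) :
    (if (e - 1) % k = 0 then
      (k : ℝ) * (p : ℝ) ^ (-(((e - 1) / k : ℕ) : ℝ) - 1 / 2)
    else
      (p : ℝ) ^ (-(((e - 1) / k : ℕ) : ℝ) - 1)) ≤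
      (if p < k ^ 6 then (k : ℝ) else 1) * ((p : ℝ) ^ e) ^ (-(1 : ℝ) / k) := by
  have hk3 : (3 : ℝ) ≤ k := by exact_mod_cast hk
  have hk0 : (0 : ℝ) < k := by linarith
  have hp1 : (1 : ℝ) ≤ p := by exact_mod_cast (by omega : 1 ≤ p)
  have hp0 : (0 : ℝ) < p := by linarith
  have hinv : (1 : ℝ) / k ≤ 1 / 3 := one_div_le_one_div_of_le (by norm_num) hk3
  have hdm := Nat.div_add_mod (e - 1) k
  have hlt := Nat.mod_lt (e - 1) (by omega : k > 0)
  set u := (e - 1) / k with hu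
  set v := (e - 1) % k with hv
  have hee : e = k * u + v + 1 := by omega
  have hpe : ((p : ℝ) ^ e) ^ (-(1 : ℝ) / k) = (p : ℝ) ^ (-(u : ℝ) - ((v : ℝ) + 1) / k) := by
    rw [← Real.rpow_natCast, ← Real.rpow_mul hp0.le]
    congr 1
    rw [hee]
    push_cast
    field_simp
    ring
  rw [hpe]
  by_cases h0 : v = 0
  · rw [if_pos h0]
    by_cases hpk : p < k ^ 6
    · rw [if_pos hpk]
      apply mul_le_mul_of_nonneg_left _ hk0.le
      apply Real.rpow_le_rpow_of_exponent_le hp1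
      rw [h0]; push_cast; rw [zero_add]; linarith
    · rw [if_neg hpk, one_mul]
      have hkp : (k : ℝ) ^ 6 ≤ p := by exact_mod_cast (not_lt.mp hpk)
      have h6 : (k : ℝ) ≤ (p : ℝ) ^ ((1 : ℝ) / 6) := by
        have := Real.rpow_le_rpow (by positivity) hkp (by norm_num : (0 : ℝ) ≤ 1 / 6)
        rw [← Real.rpow_natCast, ← Real.rpow_mul hk0.le] at this
        norm_num at this
        simpa using this
      calc (k : ℝ) * (p : ℝ) ^ (-(u : ℝ) - 1 / 2)
          ≤ (p : ℝ) ^ ((1 : ℝ) / 6) * (p : ℝ) ^ (-(u : ℝ) - 1 / 2) :=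
            mul_le_mul_of_nonneg_right h6 (by positivity)
        _ = (p : ℝ) ^ ((1 : ℝ) / 6 + (-(u : ℝ) - 1 / 2)) := (Real.rpow_add hp0 _ _).symm
        _ ≤ _ := by
            apply Real.rpow_le_rpow_of_exponent_le hp1
            rw [h0]; push_cast; rw [zero_add]; linarith
  · rw [if_neg h0]
    have h1 : (1 : ℝ) ≤ (if p < k ^ 6 then (k : ℝ) else 1) := by
      split_ifs <;> linarith
    have h2 : (p : ℝ) ^ (-(u : ℝ) - 1) ≤ (p : ℝ) ^ (-(u : ℝ) - ((v : ℝ) + 1) / k) := by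
      apply Real.rpow_le_rpow_of_exponent_le hp1
      have : ((v : ℝ) + 1) / k ≤ 1 := by
        rw [div_le_one hk0]; exact_mod_cast hlt
      linarith
    refine h2.trans ?_
    exact le_mul_of_one_le_left (by positivity) h1

/-- The bound `w_k(q) ≪ q^{-1/k}`. -/
lemma wk_le (k : ℕ) (hk : 3 ≤ k) (q : ℕ) (hq : 1 ≤ q) :
    wk k q ≤ (k : ℝ) ^ (k ^ 6) * (q : ℝ) ^ (-(1 : ℝ) / k) := by
  have hk1 : (1 : ℝ) ≤ k := by exact_mod_cast (by omega : 1 ≤ k)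
  have hqprod : (q : ℝ) = ∏ p ∈ q.primeFactors, (p : ℝ) ^ (q.factorization p) := by
    have h := Nat.prod_factorization_pow_eq_self (n := q) (by omega)
    conv_lhs => rw [← h]
    rw [Finsupp.prod, Nat.support_factorization]
    push_cast
    rfl
  have hq2 : (q : ℝ) ^ (-(1 : ℝ) / k) =
      ∏ p ∈ q.primeFactors, ((p : ℝ) ^ (q.factorization p)) ^ (-(1 : ℝ) / k) := by
    conv_lhs => rw [hqprod]
    rw [← Real.finsetProd_rpow]
    intro i _
    positivity
  have step : wk k q ≤ ∏ p ∈ q.primeFactors, ((if p < k ^ 6 then (k : ℝ) else 1) *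
      ((p : ℝ) ^ (q.factorization p)) ^ (-(1 : ℝ) / k)) := by
    unfold wk
    apply Finset.prod_le_prod
    · intro p _
      split_ifs <;> positivity
    · intro p hp
      have hpp := Nat.prime_of_mem_primeFactors hp
      exact wk_factor_le k hk p _ hpp.two_le
        (hpp.factorization_pos_of_dvd (by omega) (Nat.dvd_of_mem_primeFactors hp))
  refine step.trans ?_
  rw [Finset.prod_mul_distrib, ← hq2]
  apply mul_le_mul_of_nonneg_right _ (by positivity)
  rw [← Finset.prod_filter, Finset.prod_const]
  apply pow_le_pow_right₀ hk1
  calc _ ≤ (Finset.range (k ^ 6)).card := by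
        apply Finset.card_le_card
        intro p hp
        simp only [Finset.mem_filter] at hp
        exact Finset.mem_range.mpr hp.2
    _ = k ^ 6 := Finset.card_range _

lemma wk_nonneg' (k q : ℕ) : 0 ≤ wk k q := by
  unfold wk
  apply Finset.prod_nonneg
  intro p _
  split_ifs <;> positivity

lemma sigmak_le (k : ℕ) (hk : 3 ≤ k) : sigmak k ≤ 1 / 4 := by
  unfold sigmak
  have hk3 : (3 : ℝ) ≤ k := by exact_mod_cast hk
  apply one_div_le_one_div_of_le (by norm_num)
  apply le_min
  · calc (4 : ℝ) = 2 ^ 2 := by norm_num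
      _ ≤ 2 ^ (k - 1) := pow_le_pow_right₀ (by norm_num) (by omega)
  · nlinarith

theorem major_arc_term_small (k : ℕ) (hk : 3 ≤ k) :
    ∃ C > 0, ∀ θ ρ x α : ℝ, ∀ a : ℤ, ∀ q : ℕ,
      0 < θ → θ ≤ 1 → 0 < ρ → ρ < sigmak k → 1 ≤ x →
      1 ≤ q →
      (q : ℝ) ≤ (x ^ (θ - 1) * x ^ ((k : ℝ) - 2 * ρ)) ^ ((k : ℝ) / (2 * (k : ℝ) - 1)) →
      Int.gcd a (q : ℤ) = 1 →
      |α - (a : ℝ) / (q : ℝ)| <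
        1 / ((q : ℝ) * (x ^ (θ - 1) * x ^ ((k : ℝ) - 2 * ρ)) ^ ((k : ℝ) / (2 * (k : ℝ) - 1))) →
      (x ^ (2 * (k : ℝ) * ρ) ≤ (q : ℝ) ∨
        (x ^ (θ - 1))⁻¹ ^ 2 * x ^ ((k : ℝ) - 2 * (k : ℝ) * ρ) ≤ |(q : ℝ) * α - (a : ℝ)|) →
      wk k q ^ ((1 : ℝ) / 2) * x ^ θ *
          (1 + (x ^ (θ - 1)) ^ 2 * x ^ (k : ℝ) * |α - (a : ℝ) / (q : ℝ)|) ^ (-(1 : ℝ) / 2) ≤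
        C * x ^ (θ - ρ) := by
  have hk3 : (3 : ℝ) ≤ k := by exact_mod_cast hk
  have hk0 : (0 : ℝ) < k := by linarith
  refine ⟨((k : ℝ) ^ (k ^ 6)) ^ ((1 : ℝ) / 2), by positivity, ?_⟩
  intro θ ρ x α a q hθ hθ1 hρ hρs hx hq hqQ hgcd hα hor
  have hx0 : 0 < x := by linarith
  have hq1 : (1 : ℝ) ≤ q := by exact_mod_cast hq
  have hq0 : (0 : ℝ) < q := by linarith
  have hρ4 : ρ < 1 / 4 := lt_of_lt_of_le hρs (sigmak_le k hk)
  have hcase : x ^ (2 * (k : ℝ) * ρ) ≤ (q : ℝ) := by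
    rcases hor with h | h
    · exact h
    · exfalso
      set Q := (x ^ (θ - 1) * x ^ ((k : ℝ) - 2 * ρ)) ^ ((k : ℝ) / (2 * (k : ℝ) - 1)) with hQ
      have hQ1 : 1 ≤ Q := hq1.trans hqQ
      have e1 : |(q : ℝ) * α - (a : ℝ)| = q * |α - (a : ℝ) / (q : ℝ)| := by
        rw [← abs_of_pos hq0, ← abs_mul, abs_of_pos hq0]
        congr 1
        field_simp
      have e2 : (q : ℝ) * |α - (a : ℝ) / (q : ℝ)| < 1 := by
        have := mul_lt_mul_of_pos_left hα hq0
        refine this.trans_le ?_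
        rw [mul_one_div, div_le_one (by positivity)]
        nlinarith
      have d1 : 1 ≤ (x ^ (θ - 1))⁻¹ := by
        rw [← Real.rpow_neg hx0.le]
        exact Real.one_le_rpow hx (by linarith)
      have d2 : 1 ≤ x ^ ((k : ℝ) - 2 * (k : ℝ) * ρ) :=
        Real.one_le_rpow hx (by nlinarith)
      have d3 : 1 ≤ (x ^ (θ - 1))⁻¹ ^ 2 := one_le_pow₀ d1
      have d4 := one_le_mul_of_one_le_of_one_le d3 d2
      linarith
  have hw : wk k q ≤ (k : ℝ) ^ (k ^ 6) * x ^ (-(2 * ρ)) := by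
    refine (wk_le k hk q hq).trans ?_
    apply mul_le_mul_of_nonneg_left _ (by positivity)
    have h := Real.rpow_le_rpow_of_nonpos (by positivity) hcase
      (by apply div_nonpos_of_nonpos_of_nonneg <;> linarith : -(1 : ℝ) / k ≤ 0)
    refine h.trans (le_of_eq ?_)
    rw [← Real.rpow_mul hx0.le]
    congr 1
    field_simp
  have hw2 : wk k q ^ ((1 : ℝ) / 2) ≤ ((k : ℝ) ^ (k ^ 6)) ^ ((1 : ℝ) / 2) * x ^ (-ρ) := by
    refine (Real.rpow_le_rpow (wk_nonneg' k q) hw (by norm_num)).trans (le_of_eq ?_)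
    rw [Real.mul_rpow (by positivity) (by positivity), ← Real.rpow_mul hx0.le]
    congr 2
    ring
  have hlast : (1 + (x ^ (θ - 1)) ^ 2 * x ^ (k : ℝ) * |α - (a : ℝ) / (q : ℝ)|) ^ (-(1 : ℝ) / 2)
      ≤ 1 := by
    apply Real.rpow_le_one_of_one_le_of_nonpos _ (by norm_num)
    have : 0 ≤ (x ^ (θ - 1)) ^ 2 * x ^ (k : ℝ) * |α - (a : ℝ) / (q : ℝ)| := by positivity
    linarith
  have hwn := Real.rpow_nonneg (wk_nonneg' k q) ((1 : ℝ) / 2)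
  calc _ ≤ wk k q ^ ((1 : ℝ) / 2) * x ^ θ * 1 :=
        mul_le_mul_of_nonneg_left hlast (by positivity)
    _ ≤ (((k : ℝ) ^ (k ^ 6)) ^ ((1 : ℝ) / 2) * x ^ (-ρ)) * x ^ θ := by
        rw [mul_one]
        exact mul_le_mul_of_nonneg_right hw2 (by positivity)
    _ = _ := by
        rw [mul_assoc, ← Real.rpow_add hx0]
        congr 2
        ring
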